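/- Let K be a field, n ≥ 2, with n invertible in K (char K = 0 or char K does not divide n), and let f(x_1,…,x_m) be a multilinear polynomial over K. Then f does not satisfy (S1) and does not satisfy (S2) if and only if the K-linear span of Im(f) on M_n(K) equals M_n(K). -/

import Mathlib

/-- Evaluation of the multilinear polynomial `f(x₁,…,x_m) = ∑_{σ ∈ S_m} α_σ x_{σ(1)}⋯x_{σ(m)}`
given by coefficients `α` at the tuple `a`. -/
def mlEval {K A : Type} [Field K] [Ring A] [Algebra K A] {m : ℕ}
    (α : Equiv.Perm (Fin m) → K) (a : Fin m → A) : A :=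
  ∑ σ : Equiv.Perm (Fin m), α σ • (List.ofFn fun i => a (σ i)).prod

/-- The image of the multilinear polynomial with coefficients `α` on the algebra `A`. -/
def mlImage {K A : Type} [Field K] [Ring A] [Algebra K A] {m : ℕ}
    (α : Equiv.Perm (Fin m) → K) : Set A :=
  Set.range (mlEval α)

/-- `a` is homogeneous of degree `g` in the Vasilovsky `ZMod n`-grading of `Mₙ(K)`:
`a` lies in the span of the matrix units `E i j` with `j - i ≡ g (mod n)`. -/
def VasHomog {K : Type} [Field K] {n : ℕ} (g : ZMod n)
    (a : Matrix (Fin n) (Fin n) K) : Prop :=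
  ∀ i j : Fin n, ((j.val : ZMod n) - (i.val : ZMod n)) ≠ g → a i j = 0

/-- Statement (S0): `f` vanishes on homogeneous tuples whose degrees sum to `0`. -/
def StmtS0 {K : Type} [Field K] (n : ℕ) {m : ℕ} (α : Equiv.Perm (Fin m) → K) : Prop :=
  ∀ (g : Fin m → ZMod n) (a : Fin m → Matrix (Fin n) (Fin n) K),
    (∀ i, VasHomog (g i) (a i)) → (∑ i, g i) = 0 → mlEval α a = 0

/-- Statement (S1): `f` vanishes on homogeneous tuples whose degrees sum to a nonzero element. -/
def StmtS1 {K : Type} [Field K] (n : ℕ) {m : ℕ} (α : Equiv.Perm (Fin m) → K) : Prop :=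
  ∀ (g : Fin m → ZMod n) (a : Fin m → Matrix (Fin n) (Fin n) K),
    (∀ i, VasHomog (g i) (a i)) → (∑ i, g i) ≠ 0 → mlEval α a = 0

/-- Statement (S2): `f` has trace-zero values on homogeneous tuples whose degrees sum to `0`. -/
def StmtS2 {K : Type} [Field K] (n : ℕ) {m : ℕ} (α : Equiv.Perm (Fin m) → K) : Prop :=
  ∀ (g : Fin m → ZMod n) (a : Fin m → Matrix (Fin n) (Fin n) K),
    (∀ i, VasHomog (g i) (a i)) → (∑ i, g i) = 0 → Matrix.trace (mlEval α a) = 0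

/-- The set of scalar matrices in `Mₙ(K)`. -/
def scalarSet (K : Type) [Field K] (n : ℕ) : Set (Matrix (Fin n) (Fin n) K) :=
  {b | ∃ c : K, b = c • (1 : Matrix (Fin n) (Fin n) K)}

/-- The set `slₙ(K)` of trace-zero matrices in `Mₙ(K)`. -/
def slSet (K : Type) [Field K] (n : ℕ) : Set (Matrix (Fin n) (Fin n) K) :=
  {b | Matrix.trace b = 0}

theorem aux_prod_comm {A : Type} [Ring A] (b : A) : ∀ {m : ℕ} (a : Fin m → A),
    (List.ofFn a).prod * b - b * (List.ofFn a).prod =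
      ∑ i, (List.ofFn fun j => if j = i then a j * b - b * a j else a j).prod := by
  intro m
  induction m with
  | zero => intro a; simp
  | succ m ih =>
    intro a
    rw [Fin.sum_univ_succ]
    simp only [List.ofFn_succ, List.prod_cons, Fin.succ_ne_zero, if_true, if_false,
      (Fin.succ_ne_zero _).symm, Fin.succ_inj]
    rw [← Finset.mul_sum, ← ih (fun i => a i.succ)]
    noncomm_ring

theorem aux_comm {K A : Type} [Field K] [Ring A] [Algebra K A] {m : ℕ}
    (α : Equiv.Perm (Fin m) → K) (a : Fin m → A) (b : A) :
    mlEval α a * b - b * mlEval α a =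
      ∑ i, mlEval α (fun j => if j = i then a j * b - b * a j else a j) := by
  unfold mlEval
  rw [Finset.sum_comm, Finset.sum_mul, Finset.mul_sum, ← Finset.sum_sub_distrib]
  refine Finset.sum_congr rfl fun σ _ => ?_
  rw [← Finset.smul_sum, smul_mul_assoc, mul_smul_comm, ← smul_sub, aux_prod_comm]
  congr 1
  symm
  rw [← Equiv.sum_comp σ]
  simp only [EmbeddingLike.apply_eq_iff_eq]

theorem aux_lie {K A : Type} [Field K] [Ring A] [Algebra K A] {m : ℕ}
    (α : Equiv.Perm (Fin m) → K) (x : A) (hx : x ∈ Submodule.span K (mlImage α : Set A)) (b : A) :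
    x * b - b * x ∈ Submodule.span K (mlImage α : Set A) := by
  induction hx using Submodule.span_induction with
  | mem x h =>
    obtain ⟨a, rfl⟩ := h
    rw [aux_comm]
    exact Submodule.sum_mem _ fun i _ => Submodule.subset_span ⟨_, rfl⟩
  | zero => simp
  | add x y _ _ h1 h2 =>
    have := Submodule.add_mem _ h1 h2
    convert this using 1
    noncomm_ring
  | smul c x _ h =>
    have := Submodule.smul_mem _ c h
    rwa [smul_sub, ← smul_mul_assoc, ← mul_smul_comm] at this

/-- The associated multilinear map. -/
noncomputable def auxMM {K A : Type} [Field K] [Ring A] [Algebra K A] {m : ℕ}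
    (α : Equiv.Perm (Fin m) → K) : MultilinearMap K (fun _ : Fin m => A) A :=
  ∑ σ : Equiv.Perm (Fin m), α σ • (MultilinearMap.mkPiAlgebraFin K m A).domDomCongr σ

theorem auxMM_apply {K A : Type} [Field K] [Ring A] [Algebra K A] {m : ℕ}
    (α : Equiv.Perm (Fin m) → K) (a : Fin m → A) : auxMM α a = mlEval α a := by
  simp [auxMM, mlEval]

theorem aux_homog_prod {K : Type} [Field K] {n : ℕ} : ∀ {m : ℕ} (g : Fin m → ZMod n)
    (a : Fin m → Matrix (Fin n) (Fin n) K), (∀ i, VasHomog (g i) (a i)) →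
    VasHomog (∑ i, g i) (List.ofFn a).prod := by
  intro m
  induction m with
  | zero =>
    intro g a _ i j hij
    have : i ≠ j := by rintro rfl; simp at hij
    simp [Matrix.one_apply, this]
  | succ m ih =>
    intro g a h i j hij
    rw [List.ofFn_succ, List.prod_cons, Matrix.mul_apply]
    refine Finset.sum_eq_zero fun k _ => ?_
    by_cases h1 : ((k.val : ZMod n) - (i.val : ZMod n)) = g 0
    · rw [ih (fun i => g i.succ) (fun i => a i.succ) (fun i => h _) k j, mul_zero]
      intro h2
      apply hij
      rw [Fin.sum_univ_succ, ← h1, ← h2]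
      ring
    · rw [h 0 i k h1, zero_mul]

theorem aux_homog {K : Type} [Field K] {n m : ℕ} (α : Equiv.Perm (Fin m) → K) (g : Fin m → ZMod n)
    (a : Fin m → Matrix (Fin n) (Fin n) K) (h : ∀ i, VasHomog (g i) (a i)) :
    VasHomog (∑ i, g i) (mlEval α a) := by
  intro i j hij
  unfold mlEval
  rw [Matrix.sum_apply]
  refine Finset.sum_eq_zero fun σ _ => ?_
  rw [Matrix.smul_apply, aux_homog_prod (fun i => g (σ i)) (fun i => a (σ i)) (fun i => h _) i j,
    smul_zero]
  rwa [Equiv.sum_comp σ g]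

/-- Homogeneous component. -/
def auxComp {K : Type} [Field K] {n : ℕ} (a : Matrix (Fin n) (Fin n) K) (g : ZMod n) :
    Matrix (Fin n) (Fin n) K :=
  fun i j => if ((j.val : ZMod n) - (i.val : ZMod n)) = g then a i j else 0

theorem auxComp_homog {K : Type} [Field K] {n : ℕ} (a : Matrix (Fin n) (Fin n) K) (g : ZMod n) :
    VasHomog g (auxComp a g) := by
  intro i j h
  simp [auxComp, h]

theorem aux_decomp {K : Type} [Field K] {n m : ℕ} [NeZero n] (α : Equiv.Perm (Fin m) → K)
    (a : Fin m → Matrix (Fin n) (Fin n) K) :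
    mlEval α a = ∑ r : Fin m → ZMod n, mlEval α (fun i => auxComp (a i) (r i)) := by
  have : a = fun i => ∑ g : ZMod n, auxComp (a i) g := by
    funext i
    ext p q
    rw [Matrix.sum_apply]
    simp [auxComp]
  conv_lhs => rw [this]
  rw [← auxMM_apply, MultilinearMap.map_sum]
  simp only [auxMM_apply]

theorem aux_cast_inj {n : ℕ} {i j : Fin n} (h : (j.val : ZMod n) - (i.val : ZMod n) = 0) :
    i = j := by
  rw [sub_eq_zero, ZMod.natCast_eq_natCast_iff', Nat.mod_eq_of_lt j.2, Nat.mod_eq_of_lt i.2] at h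
  exact Fin.ext h.symm

theorem aux_ss {K : Type} [Field K] {n : ℕ} (i j k l : Fin n) :
    Matrix.single i j (1 : K) * Matrix.single k l (1 : K) =
      if j = k then Matrix.single i l 1 else 0 := by
  split_ifs with h
  · subst h; simp
  · simp [h]

theorem aux_ssx {K : Type} [Field K] {n : ℕ} (i j k l : Fin n) (x : Matrix (Fin n) (Fin n) K) :
    Matrix.single i j (1 : K) * (Matrix.single k l (1 : K) * x) =
      if j = k then Matrix.single i l 1 * x else 0 := by
  rw [← mul_assoc, aux_ss]
  split_ifs <;> simp

theorem aux_sxs {K : Type} [Field K] {n : ℕ} (i j k l : Fin n) (x : Matrix (Fin n) (Fin n) K) :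
    Matrix.single i j (1 : K) * (x * Matrix.single k l (1 : K)) =
      x j k • Matrix.single i l 1 := by
  rw [← mul_assoc]
  simp [Matrix.smul_single]

theorem aux_offdiag {K : Type} [Field K] (n : ℕ) (hn : 2 ≤ n) (hchar : (n : K) ≠ 0)
    (L : Submodule K (Matrix (Fin n) (Fin n) K))
    (hL : ∀ x ∈ L, ∀ y, x * y - y * x ∈ L) (b : Matrix (Fin n) (Fin n) K) (hb : b ∈ L)
    (i j : Fin n) (hij : i ≠ j) (hbij : b i j ≠ 0) (p q : Fin n) (hpq : p ≠ q) :
    Matrix.single p q (1 : K) ∈ L := by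
  have right : ∀ i k l : Fin n, l ≠ i → Matrix.single i k (1 : K) ∈ L →
      Matrix.single i l (1 : K) ∈ L := by
    intro i k l hl h
    have := hL _ h (Matrix.single k l 1)
    rwa [Matrix.single_mul_single_same, Matrix.single_mul_single_of_ne _ _ _ _ hl, sub_zero,
      mul_one] at this
  have left : ∀ i k l : Fin n, l ≠ k → Matrix.single i k (1 : K) ∈ L →
      Matrix.single l k (1 : K) ∈ L := by
    intro i k l hl h
    have := hL _ h (Matrix.single l i 1)
    rw [Matrix.single_mul_single_same, Matrix.single_mul_single_of_ne _ _ _ _ hl.symm, zero_sub,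
      mul_one] at this
    exact (Submodule.neg_mem_iff _).1 this
  by_cases h2 : (2 : K) = 0
  · have hn3 : ∀ i k : Fin n, ∃ l, l ≠ i ∧ l ≠ k := by
      have : n ≠ 2 := by rintro rfl; exact hchar (by exact_mod_cast h2)
      intro i k
      have : ({i, k} : Finset (Fin n)).card < Fintype.card (Fin n) := by
        have := Finset.card_le_two (a := i) (b := k)
        rw [Fintype.card_fin]; omega
      obtain ⟨l, hl⟩ := Finset.exists_mem_notMem_of_card_lt_card
        (s := {i, k}) (t := Finset.univ) (by simpa using this)
      refine ⟨l, ?_⟩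
      simpa using hl
    obtain ⟨k, hki, hkj⟩ := hn3 i j
    have h1 : Matrix.single i k (1 : K) ∈ L := by
      have h3 := hL _ (hL _ (hL _ hb (Matrix.single i i 1)) (Matrix.single j j 1))
        (Matrix.single j k 1)
      have h4 := L.smul_mem (-(b i j)⁻¹) h3
      convert h4 using 1
      simp only [sub_mul, mul_sub, mul_assoc, aux_ss, aux_ssx, aux_sxs, hij, hij.symm, hki, hki.symm, hkj, hkj.symm, if_true, if_false, mul_zero, smul_zero, sub_zero, zero_sub, zero_mul]
      simp [hbij, hij, hij.symm, hki, hki.symm, hkj, hkj.symm]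
    obtain ⟨l, hli, hlk⟩ := hn3 i k
    by_cases hqi : q = i
    · subst hqi
      exact left _ _ _ hpq (right _ _ _ hli.symm (left _ _ _ hlk h1))
    · exact left _ _ _ hpq (right _ _ _ hqi h1)
  · have h1 : Matrix.single j i (1 : K) ∈ L := by
      have h3 := hL _ (hL _ hb (Matrix.single j i 1)) (Matrix.single j i 1)
      have h4 := L.smul_mem (-(2 * b i j)⁻¹) h3
      convert h4 using 1
      simp only [sub_mul, mul_sub, mul_assoc, aux_ss, aux_ssx, aux_sxs, hij, hij.symm, if_true, if_false, mul_zero, smul_zero, sub_zero, zero_sub, zero_mul]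
      rw [← neg_add', ← two_smul K, smul_neg, smul_smul, smul_smul]
      simp
      field_simp
    have h1' : Matrix.single i j (1 : K) ∈ L := by
      have h3 := hL _ (hL _ h1 (Matrix.single i j 1)) (Matrix.single i j 1)
      have h4 := L.smul_mem (-(2)⁻¹) h3
      convert h4 using 1
      simp only [sub_mul, mul_sub, mul_assoc, aux_ss, aux_ssx, aux_sxs, hij, hij.symm, if_true, if_false, mul_zero, smul_zero, sub_zero, zero_sub, zero_mul]
      rw [← neg_add', ← two_smul K, smul_neg, smul_smul]
      simp [h2]
    by_cases hqi : q = i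
    · subst hqi
      exact left _ _ _ hpq h1
    · exact left _ _ _ hpq (right _ _ _ hqi h1')

theorem aux_top {K : Type} [Field K] (n : ℕ) 
    (L : Submodule K (Matrix (Fin n) (Fin n) K))
    (hL : ∀ x ∈ L, ∀ y, x * y - y * x ∈ L)
    (ho : ∀ p q : Fin n, p ≠ q → Matrix.single p q (1 : K) ∈ L)
    (t : Matrix (Fin n) (Fin n) K) (ht : t ∈ L) (htr : t.trace ≠ 0) : L = ⊤ := by
  have ho' : ∀ (p q : Fin n) (c : K), p ≠ q → Matrix.single p q c ∈ L := by
    intro p q c h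
    simpa [Matrix.smul_single] using L.smul_mem c (ho p q h)
  have hd : ∀ (p q : Fin n) (c : K), Matrix.single p p c - Matrix.single q q c ∈ L := by
    intro p q c
    by_cases h : p = q
    · simp [h]
    · simpa using hL _ (ho p q h) (Matrix.single q p c)
  have key : ∀ (x : Matrix (Fin n) (Fin n) K) (k : Fin n),
      x - Matrix.single k k x.trace ∈ L := by
    intro x k
    have : x - Matrix.single k k x.trace = ∑ i, ∑ j, (Matrix.single i j (x i j) -
        if i = j then Matrix.single k k (x i j) else 0) := by
      simp only [Finset.sum_sub_distrib]
      rw [← Matrix.matrix_eq_sum_single x]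
      simp only [Finset.sum_ite_eq, Finset.mem_univ, if_true]
      congr 1
      simp only [← Matrix.singleAddMonoidHom_apply, Matrix.trace, Matrix.diag, map_sum]
    rw [this]
    refine L.sum_mem fun i _ => L.sum_mem fun j _ => ?_
    split_ifs with h
    · subst h; exact hd _ _ _
    · rw [sub_zero]; exact ho' _ _ _ h
  have hk : ∀ (k : Fin n) (c : K), Matrix.single k k c ∈ L := by
    intro k c
    have h1 : Matrix.single k k t.trace ∈ L := by
      have := L.sub_mem ht (key t k)
      rwa [sub_sub_cancel] at this
    have := L.smul_mem (c / t.trace) h1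
    rwa [Matrix.smul_single, smul_eq_mul, div_mul_cancel₀ _ htr] at this
  rw [eq_top_iff]
  intro x _
  rw [Matrix.matrix_eq_sum_single x]
  refine L.sum_mem fun i _ => L.sum_mem fun j _ => ?_
  by_cases h : i = j
  · subst h; exact hk _ _
  · exact ho' _ _ _ h

theorem aux_not_top {K V : Type} [Field K] [AddCommGroup V] [Module K V] (S : Set V)
    (φ : V →ₗ[K] K) (h : ∀ x ∈ S, φ x = 0) (v : V) (hv : φ v ≠ 0) : Submodule.span K S ≠ ⊤ := by
  intro ht
  have : Submodule.span K S ≤ LinearMap.ker φ := Submodule.span_le.2 fun x hx => h x hx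
  rw [ht] at this
  exact hv (this (Submodule.mem_top (x := v)))

/-- when `n` is invertible in `K`, a multilinear polynomial fails both (S1) and (S2)
iff the linear span of its image on `Mₙ(K)` is all of `Mₙ(K)`. -/
theorem stmt_8 {K : Type} [Field K] (n : ℕ) (hn : 2 ≤ n) (hchar : (n : K) ≠ 0) {m : ℕ}
    (α : Equiv.Perm (Fin m) → K) :
    (¬ StmtS1 n α ∧ ¬ StmtS2 n α) ↔
      Submodule.span K (mlImage α : Set (Matrix (Fin n) (Fin n) K)) = ⊤ := by
  have : NeZero n := ⟨by omega⟩
  constructor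
  · rintro ⟨h1, h2⟩
    unfold StmtS1 at h1
    unfold StmtS2 at h2
    push Not at h1 h2
    obtain ⟨g, a, ha, hg, hne⟩ := h1
    obtain ⟨g', a', ha', hg', hne'⟩ := h2
    have hex : ∃ i j, mlEval α a i j ≠ 0 := by
      by_contra hcon
      push Not at hcon
      exact hne (Matrix.ext hcon)
    obtain ⟨i, j, hij⟩ := hex
    have hd : i ≠ j := by
      rintro rfl
      apply hij
      apply aux_homog α g a ha
      rw [sub_self]
      exact hg.symm
    exact aux_top n _ (aux_lie α)
      (aux_offdiag n hn hchar _ (aux_lie α) _ (Submodule.subset_span ⟨a, rfl⟩) i j hd hij)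
      _ (Submodule.subset_span ⟨a', rfl⟩) hne'
  · intro ht
    constructor
    · intro h
      refine aux_not_top _ (Matrix.entryLinearMap K K (⟨0, by omega⟩ : Fin n)
        (⟨1, by omega⟩ : Fin n)) ?_
        (Matrix.single (⟨0, by omega⟩ : Fin n) (⟨1, by omega⟩ : Fin n) 1) ?_ ht
      · rintro _ ⟨a, rfl⟩
        rw [aux_decomp, map_sum]
        refine Finset.sum_eq_zero fun r _ => ?_
        by_cases hr : ∑ i, r i = 0
        · rw [Matrix.entryLinearMap_apply]
          apply aux_homog α r _ (fun i => auxComp_homog _ _)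
          rw [hr]
          intro h0
          simpa using aux_cast_inj h0
        · rw [h r _ (fun i => auxComp_homog _ _) hr, map_zero]
      · rw [Matrix.entryLinearMap_apply, Matrix.single_apply_same]
        exact one_ne_zero
    · intro h
      refine aux_not_top _ (Matrix.traceLinearMap (Fin n) K K) ?_
        (Matrix.single (⟨0, by omega⟩ : Fin n) ⟨0, by omega⟩ 1) ?_ ht
      · rintro _ ⟨a, rfl⟩
        rw [aux_decomp, map_sum]
        refine Finset.sum_eq_zero fun r _ => ?_
        rw [Matrix.traceLinearMap_apply]
        by_cases hr : ∑ i, r i = 0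
        · exact h r _ (fun i => auxComp_homog _ _) hr
        · refine Finset.sum_eq_zero fun i _ => ?_
          apply aux_homog α r _ (fun i => auxComp_homog _ _)
          rw [sub_self]
          exact fun h => hr h.symm
      · simp
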